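/- arXiv:2306.05932 — 4 statements merged into one kernel-verified Lean document; each statement's English description precedes it below -/
import Mathlib

section
/- Let n₁, …, n_k be positive integers, d₁, …, d_k nonnegative integers, n = n₁ + ⋯ + n_k, and N = ∏_i C(n_i + d_i, n_i). For any points a₁, …, a_z, each a tuple in ∏_i (ℂ^{n_i+1}∖{0}), the ℂ-vector space of multihomogeneous polynomials of multidegree (d₁, …, d_k) vanishing to order ≥ 2 at each a_j has dimension at least N − z(n+1). (Each double point imposes at most n+1 linear conditions, because the Euler relations of the k gradings make the k radial derivative conditions coincide, up to scalar, with the single condition f(a_j) = 0.) -/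
open MvPolynomial

noncomputable section

/-- The space of multihomogeneous polynomials of multidegree `d` in `k` groups of
variables, the `i`-th group having `n i + 1` variables. -/
def multiHomog {k : ℕ} (n d : Fin k → ℕ) :
    Submodule ℂ (MvPolynomial ((i : Fin k) × Fin (n i + 1)) ℂ) :=
  weightedHomogeneousSubmodule ℂ (fun v => (Pi.single v.1 1 : Fin k → ℕ)) d

/-- The space of polynomials vanishing at the point `p`. -/
def vanishingAt {k : ℕ} (n : Fin k → ℕ) (p : (i : Fin k) → Fin (n i + 1) → ℂ) :
    Submodule ℂ (MvPolynomial ((i : Fin k) × Fin (n i + 1)) ℂ) :=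
  LinearMap.ker ((aeval (fun v : (i : Fin k) × Fin (n i + 1) => p v.1 v.2)).toLinearMap :
    MvPolynomial ((i : Fin k) × Fin (n i + 1)) ℂ →ₗ[ℂ] ℂ)

/-- The space of polynomials vanishing to order `≥ 2` at the point `p`:
the polynomial and all its first-order partial derivatives vanish at `p`. -/
def doubleVanishingAt {k : ℕ} (n : Fin k → ℕ) (p : (i : Fin k) → Fin (n i + 1) → ℂ) :
    Submodule ℂ (MvPolynomial ((i : Fin k) × Fin (n i + 1)) ℂ) :=
  vanishingAt n p ⊓ ⨅ v : (i : Fin k) × Fin (n i + 1),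
    Submodule.comap (pderiv v).toLinearMap (vanishingAt n p)

/-- The space of multihomogeneous polynomials of multidegree `d` vanishing to order `≥ 2`
at each of the points `a j`. -/
def doubleVanishingSpace {k : ℕ} (n d : Fin k → ℕ) {z : ℕ}
    (a : Fin z → (i : Fin k) → Fin (n i + 1) → ℂ) :
    Submodule ℂ (MvPolynomial ((i : Fin k) × Fin (n i + 1)) ℂ) :=
  multiHomog n d ⊓ ⨅ j, doubleVanishingAt n (a j)

/-!
At a point with nonzero components `p i`, choose in each group `i` of variables one whose
coordinate at `p` is nonzero. If `f` is multihomogeneous and vanishes at `p`, Euler's relation for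
the `i`-th grading, evaluated at `p`, expresses the derivative of `f` along the chosen variable as
a combination of the other derivatives of group `i`. So a double point is cut out by the value of
`f` and `n i` derivatives in each group, that is, by `1 + ∑ i, n i` linear conditions, on any
space of multihomogeneous polynomials; imposing the points one after another gives the bound.
-/

section Codimension

open Module (finrank)

variable {K M κ : Type*} [Fintype κ]

lemma finrank_le_finrank_inf_iInf_ker_add_card [Field K] [AddCommGroup M] [Module K M]
    (V : Submodule K M) [FiniteDimensional K V] (φ : κ → Module.Dual K M) :
    finrank K V ≤ finrank K ↥(V ⊓ ⨅ j, LinearMap.ker (φ j)) + Fintype.card κ := by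
  let L : V →ₗ[K] κ → K := (LinearMap.pi φ).domRestrict V
  have finrank_ker : finrank K (LinearMap.ker L) =
      finrank K ↥(V ⊓ ⨅ j, LinearMap.ker (φ j)) := by
    rw [← LinearMap.ker_pi, ← Submodule.map_comap_subtype, ← LinearMap.ker_domRestrict,
      Submodule.finrank_map_subtype_eq]
  have finrank_range : finrank K (LinearMap.range L) ≤ Fintype.card κ :=
    (LinearMap.range L).finrank_le.trans_eq (Module.finrank_fintype_fun_eq_card K)
  rw [← L.finrank_range_add_finrank_ker, finrank_ker, add_comm]
  gcongr

lemma finrank_le_finrank_inf_iInf_add_card_mul [Semiring K] [AddCommMonoid M] [Module K M]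
    {W : Submodule K M} {S : κ → Submodule K M} {c : ℕ}
    (h : ∀ V ≤ W, ∀ j, finrank K V ≤ finrank K ↥(V ⊓ S j) + c) :
    finrank K W ≤ finrank K ↥(W ⊓ ⨅ j, S j) + Fintype.card κ * c := by
  classical
  suffices finset_bound :
      ∀ s : Finset κ, finrank K W ≤ finrank K ↥(W ⊓ s.inf S) + s.card * c by
    rw [← Finset.inf_univ_eq_iInf, ← Finset.card_univ]
    exact finset_bound Finset.univ
  intro s
  induction s using Finset.induction_on with
  | empty => rw [Finset.inf_empty, inf_top_eq, Finset.card_empty, zero_mul, add_zero]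
  | insert j s hj ih =>
    calc finrank K W
        ≤ finrank K ↥(W ⊓ s.inf S) + s.card * c := ih
      _ ≤ finrank K ↥((W ⊓ s.inf S) ⊓ S j) + c + s.card * c := by
        gcongr
        exact h _ inf_le_left j
      _ = finrank K ↥(W ⊓ (insert j s).inf S) + (insert j s).card * c := by
        rw [Finset.inf_insert, inf_assoc, inf_comm (S j), Finset.card_insert_of_notMem hj]
        ring

end Codimension

/-- The polynomials of multidegree `d` in groups of variables indexed by `ι`, the `i`-th group
being `X ⟨i, l⟩` for `l : σ i`: multihomogeneity is homogeneity for the weight that gives each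
variable of the `i`-th group the `i`-th unit vector. -/
def multihomogeneousSubmodule (R : Type*) [CommSemiring R] {ι : Type*} [DecidableEq ι]
    (σ : ι → Type*) (d : ι → ℕ) : Submodule R (MvPolynomial (Σ i, σ i) R) :=
  weightedHomogeneousSubmodule R (fun v => (Pi.single v.1 1 : ι → ℕ)) d

section Multihomogeneous

variable {R ι : Type*} {σ : ι → Type*} [DecidableEq ι]

lemma weight_piSingle_apply [∀ i, Fintype (σ i)] (m : (Σ i, σ i) →₀ ℕ) (i : ι) :
    Finsupp.weight (fun v : Σ i, σ i => (Pi.single v.1 1 : ι → ℕ)) m i = ∑ l, m ⟨i, l⟩ := by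
  classical
  induction m using Finsupp.induction_linear with
  | zero => simp
  | add m m' hm hm' => simp [hm, hm', Finset.sum_add_distrib]
  | single v e =>
    obtain ⟨i', l'⟩ := v
    obtain rfl | hne := eq_or_ne i' i
    · simp [Finsupp.weight_single, Finsupp.single_apply]
    · simp [Finsupp.weight_single, hne.symm]

/-- Exponent vectors of multidegree `d` correspond to tuples of multisets of sizes `d i`; they
index the monomial basis of `multihomogeneousSubmodule R σ d`. -/
def multidegreeEquivPiSym [Finite ι] (σ : ι → Type*) [∀ i, Fintype (σ i)]
    [∀ i, DecidableEq (σ i)] (d : ι → ℕ) :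
    {m : (Σ i, σ i) →₀ ℕ | Finsupp.weight (fun v => (Pi.single v.1 1 : ι → ℕ)) m = d} ≃
      ((i : ι) → Sym (σ i) (d i)) :=
  calc ↥{m : (Σ i, σ i) →₀ ℕ | Finsupp.weight (fun v => (Pi.single v.1 1 : ι → ℕ)) m = d}
    _ ≃ {m : (i : ι) → σ i → ℕ // ∀ i, ∑ l, m i l = d i} :=
      (Finsupp.equivFunOnFinite.trans (Equiv.piCurry fun _ _ => ℕ)).subtypeEquiv fun m => by
        simp only [Set.mem_ofPred, _root_.funext_iff, weight_piSingle_apply]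
        rfl
    _ ≃ ((i : ι) → {m : σ i → ℕ // ∑ l, m l = d i}) :=
      Equiv.subtypePiEquivPi (p := fun i (m : σ i → ℕ) => ∑ l, m l = d i)
    _ ≃ ((i : ι) → Sym (σ i) (d i)) :=
      Equiv.piCongrRight fun i => (Sym.equivNatSumOfFintype (σ i) (d i)).symm

/-- The monomial basis of the space of polynomials of multidegree `d`. -/
def multihomogeneousBasis (R : Type*) [CommSemiring R] [Finite ι] (σ : ι → Type*)
    [∀ i, Fintype (σ i)] [∀ i, DecidableEq (σ i)] (d : ι → ℕ) :
    Module.Basis ((i : ι) → Sym (σ i) (d i)) R (multihomogeneousSubmodule R σ d) :=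
  ((basisRestrictSupport R _).map (LinearEquiv.ofEq _ _
    (weightedHomogeneousSubmodule_eq_finsupp_supported R _ d).symm)).reindex
    (multidegreeEquivPiSym σ d)

instance finite_multihomogeneousSubmodule [CommSemiring R] [Finite ι] [∀ i, Finite (σ i)]
    (d : ι → ℕ) : Module.Finite R (multihomogeneousSubmodule R σ d) := by
  classical
  have (i : ι) : Fintype (σ i) := Fintype.ofFinite (σ i)
  exact .of_basis (multihomogeneousBasis R σ d)

lemma finrank_multihomogeneousSubmodule [CommSemiring R] [StrongRankCondition R] [Fintype ι]
    [∀ i, Fintype (σ i)] (d : ι → ℕ) :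
    Module.finrank R (multihomogeneousSubmodule R σ d) =
      ∏ i, (Fintype.card (σ i)).multichoose (d i) := by
  classical
  simp [Module.finrank_eq_card_basis (multihomogeneousBasis R σ d), Sym.card_sym_eq_multichoose]

lemma sum_X_mul_pderiv_of_mem_multihomogeneousSubmodule [CommSemiring R] [Finite ι]
    [∀ i, Fintype (σ i)] {d : ι → ℕ} {f : MvPolynomial (Σ i, σ i) R}
    (hf : f ∈ multihomogeneousSubmodule R σ d) (i : ι) :
    ∑ l, X ⟨i, l⟩ * pderiv ⟨i, l⟩ f = d i • f := by
  cases nonempty_fintype ι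
  have hi : f.IsWeightedHomogeneous (fun v : Σ i, σ i => (Pi.single v.1 1 : ι → ℕ) i) (d i) := by
    intro m hm
    rw [← hf hm, Finsupp.weight_eq_sum, Finsupp.weight_eq_sum, Finset.sum_apply]
    rfl
  rw [← hi.sum_weight_X_mul_pderiv, Fintype.sum_sigma, Finset.sum_eq_single_of_mem i (by simp)]
  · simp
  · intro i' _ hne
    simp [hne.symm]

lemma aeval_pderiv_eq_zero_of_forall_ne [CommSemiring R] [NoZeroDivisors R] [Finite ι]
    [∀ i, Finite (σ i)] {d : ι → ℕ} {f : MvPolynomial (Σ i, σ i) R}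
    (hf : f ∈ multihomogeneousSubmodule R σ d)
    {p : (Σ i, σ i) → R} (hfp : aeval p f = 0) {i : ι} {l : σ i} (hp : p ⟨i, l⟩ ≠ 0)
    (h : ∀ l' ≠ l, aeval p (pderiv ⟨i, l'⟩ f) = 0) : aeval p (pderiv ⟨i, l⟩ f) = 0 := by
  have (i : ι) : Fintype (σ i) := Fintype.ofFinite (σ i)
  have euler : ∑ l', p ⟨i, l'⟩ * aeval p (pderiv ⟨i, l'⟩ f) = 0 := by
    simpa only [map_sum, map_mul, aeval_X, map_nsmul, hfp, smul_zero] using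
      congrArg (aeval p) (sum_X_mul_pderiv_of_mem_multihomogeneousSubmodule hf i)
  rw [Fintype.sum_eq_single l fun l' hl' => by rw [h l' hl', mul_zero]] at euler
  exact (mul_eq_zero.mp euler).resolve_left hp

end Multihomogeneous

/-- The polynomials vanishing to order `≥ 2` at `p`: they and their first-order partial
derivatives vanish at `p`. -/
def doublePointSubmodule {R τ : Type*} [CommSemiring R] (p : τ → R) :
    Submodule R (MvPolynomial τ R) :=
  LinearMap.ker (aeval p : MvPolynomial τ R →ₐ[R] R).toLinearMap ⊓
    ⨅ v, (LinearMap.ker (aeval p : MvPolynomial τ R →ₐ[R] R).toLinearMap).comap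
      (pderiv v).toLinearMap

lemma mem_doublePointSubmodule {R τ : Type*} [CommSemiring R] {p : τ → R}
    {f : MvPolynomial τ R} :
    f ∈ doublePointSubmodule p ↔ aeval p f = 0 ∧ ∀ v, aeval p (pderiv v f) = 0 := by
  simp [doublePointSubmodule]

/-- Evaluation at `p`, together with evaluation at `p` of every first-order partial derivative
except, in each group `i`, the one along the pivot variable `X ⟨i, c i⟩`. -/
def reducedDoublePointConditions {R ι : Type*} [CommSemiring R] {σ : ι → Type*}
    (p : (Σ i, σ i) → R) (c : (i : ι) → σ i) :
    Option (Σ i, {l : σ i // l ≠ c i}) → Module.Dual R (MvPolynomial (Σ i, σ i) R)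
  | none => (aeval p).toLinearMap
  | some v => (aeval p).toLinearMap ∘ₗ (pderiv ⟨v.1, v.2⟩).toLinearMap

section DoublePoint

open Module (finrank)

variable {K ι κ : Type*} {σ : ι → Type*} [DecidableEq ι]

lemma mem_doublePointSubmodule_of_reducedDoublePointConditions [CommSemiring K] [NoZeroDivisors K]
    [Finite ι] [∀ i, Finite (σ i)] {d : ι → ℕ} {f : MvPolynomial (Σ i, σ i) K}
    (hf : f ∈ multihomogeneousSubmodule K σ d) {p : (Σ i, σ i) → K} {c : (i : ι) → σ i}
    (hc : ∀ i, p ⟨i, c i⟩ ≠ 0) (h : ∀ o, reducedDoublePointConditions p c o f = 0) :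
    f ∈ doublePointSubmodule p := by
  have hfp : aeval p f = 0 := h none
  have nonpivot (i : ι) (l : σ i) (hl : l ≠ c i) : aeval p (pderiv ⟨i, l⟩ f) = 0 :=
    h (some ⟨i, l, hl⟩)
  refine mem_doublePointSubmodule.mpr ⟨hfp, fun ⟨i, l⟩ => ?_⟩
  obtain rfl | hl := eq_or_ne l (c i)
  · exact aeval_pderiv_eq_zero_of_forall_ne hf hfp (hc i) (nonpivot i)
  · exact nonpivot i l hl

variable [Field K] [Fintype ι] [∀ i, Fintype (σ i)]

lemma finrank_le_finrank_inf_doublePointSubmodule_add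
    {d : ι → ℕ} {V : Submodule K (MvPolynomial (Σ i, σ i) K)}
    (hV : V ≤ multihomogeneousSubmodule K σ d) {p : (i : ι) → σ i → K} (hp : ∀ i, p i ≠ 0) :
    finrank K V ≤
      finrank K ↥(V ⊓ doublePointSubmodule fun v => p v.1 v.2) +
        (∑ i, (Fintype.card (σ i) - 1) + 1) := by
  classical
  have : FiniteDimensional K V := Submodule.finiteDimensional_of_le hV
  choose c hc using fun i => Function.ne_iff.mp (hp i)
  let φ := reducedDoublePointConditions (fun v => p v.1 v.2) c
  have ker_le : V ⊓ ⨅ o, LinearMap.ker (φ o) ≤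
      V ⊓ doublePointSubmodule fun v => p v.1 v.2 := fun f ⟨hfV, hfφ⟩ =>
    ⟨hfV, mem_doublePointSubmodule_of_reducedDoublePointConditions (hV hfV) hc
      ((Submodule.mem_iInf _).mp hfφ)⟩
  have card_conditions : Fintype.card (Option (Σ i, {l : σ i // l ≠ c i})) =
      ∑ i, (Fintype.card (σ i) - 1) + 1 := by
    simp [Fintype.card_subtype_compl]
  calc finrank K V
      ≤ finrank K ↥(V ⊓ ⨅ o, LinearMap.ker (φ o)) +
          Fintype.card (Option (Σ i, {l : σ i // l ≠ c i})) :=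
        finrank_le_finrank_inf_iInf_ker_add_card V φ
    _ ≤ finrank K ↥(V ⊓ doublePointSubmodule fun v => p v.1 v.2) +
          (∑ i, (Fintype.card (σ i) - 1) + 1) := by
      rw [card_conditions]
      gcongr
      exact Submodule.finrank_mono ker_le

-- The subtraction truncates only if some `σ i` is empty, and then `ha` forces `κ` to be empty.
theorem doubleVanishingSpace_dim_ge_general [Fintype κ] (d : ι → ℕ)
    (a : κ → (i : ι) → σ i → K) (ha : ∀ j i, a j i ≠ 0) :
    ∏ i, (Fintype.card (σ i)).multichoose (d i) ≤
      finrank K ↥(multihomogeneousSubmodule K σ d ⊓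
        ⨅ j, doublePointSubmodule fun v => a j v.1 v.2) +
      Fintype.card κ * (∑ i, (Fintype.card (σ i) - 1) + 1) := by
  rw [← finrank_multihomogeneousSubmodule (R := K)]
  exact finrank_le_finrank_inf_iInf_add_card_mul fun _ hV j =>
    finrank_le_finrank_inf_doublePointSubmodule_add hV (ha j)

end DoublePoint

/-- Each double point imposes at most `n + 1` conditions: for any points
`a₁, …, a_z`, each a tuple of nonzero vectors, the space of multihomogeneous polynomials of
multidegree `d` vanishing to order `≥ 2` at each `a j` has dimension at least
`N - z * (n + 1)`, where `N = ∏ᵢ C(nᵢ + dᵢ, nᵢ)` and `n = ∑ᵢ nᵢ`. -/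
theorem doubleVanishingSpace_dim_ge
    (k : ℕ) (hk : 1 ≤ k) (n d : Fin k → ℕ) (hn : ∀ i, 1 ≤ n i)
    (z : ℕ) (a : Fin z → (i : Fin k) → Fin (n i + 1) → ℂ)
    (ha : ∀ j i, a j i ≠ 0) :
    ((∏ i, Nat.choose (n i + d i) (n i) : ℕ) : ℤ) - z * ((∑ i, n i) + 1) ≤
      (Module.finrank ℂ (doubleVanishingSpace n d a) : ℤ) := by
  have bound : _ ≤ Module.finrank ℂ (doubleVanishingSpace n d a) + _ :=
    doubleVanishingSpace_dim_ge_general d a ha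
  simp only [Fintype.card_fin, Nat.multichoose_eq, add_tsub_cancel_right,
    Nat.add_right_comm _ 1, ← Nat.choose_symm_add] at bound
  exact sub_le_iff_le_add.mpr (mod_cast bound)
end
end

section
/- For every integer a ≥ 1 and for all points a₁, …, a_{2a+1} ∈ (ℂ²∖{0}) × (ℂ²∖{0}), there exists a nonzero bihomogeneous polynomial f(x₀, x₁; y₀, y₁) of bidegree (2a, 2) such that f and all four of its first-order partial derivatives vanish at each a_j. In particular, since the space of bidegree-(2a,2) bihomogeneous polynomials has dimension N = 3(2a+1), the space of such polynomials vanishing to order ≥ 2 at 2a+1 points always has dimension strictly greater than the expected value max{0, N − 3(2a+1)} = 0, so the pair (P¹×P¹, O(2a,2)) is secant defective in its (2a+1)-secant variety. -/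
open MvPolynomial

noncomputable section

/-- Dimension vector of `ℙ¹ × ℙ¹`: two groups of `2` variables each. -/
def biDims : Fin 2 → ℕ := fun _ => 1

/-!
A square `T ^ 2` vanishes to order at least two wherever `T` vanishes. Forms of multidegree `d` have
dimension `∏ i, multichoose (n i + 1) (d i)`, so a nonzero one passes through any smaller number of
points, and its square lies in multidegree `2 • d`. For `ℙ¹ × ℙ¹` and `d = (a, 1)` the dimension is
`2 * (a + 1)`, one more than the number of points.
-/

section Dimension

variable {ι : Type*} [DecidableEq ι] {κ : ι → Type*}

theorem weight_single_fst_apply (m : ((i : ι) × κ i) →₀ ℕ) (i : ι) :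
    Finsupp.weight (fun v => (Pi.single v.1 1 : ι → ℕ)) m i = (m.split i).sum fun _ => id := by
  rw [Finsupp.weight_apply, Finsupp.sum_apply', Finsupp.sigma_sum, Finset.sum_eq_single i]
  · simp [Finsupp.sum]
  · intro j _ hji
    simp [Finsupp.sum, hji.symm]
  · intro hi
    rw [Finsupp.mem_splitSupport_iff_nonzero, not_not] at hi
    simp [hi]

/-- The monomials of multidegree `d` in the groups of variables `κ i`, identified with the choices
of a monomial of degree `d i` in each group. Monomials are given by their exponents on the left and
by the multiset of their variables on the right. -/
def multidegreeExponentsEquiv [Fintype ι] [∀ i, DecidableEq (κ i)] (d : ι → ℕ) :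
    {m : ((i : ι) × κ i) →₀ ℕ | Finsupp.weight (fun v => (Pi.single v.1 1 : ι → ℕ)) m = d} ≃
      ((i : ι) → Sym (κ i) (d i)) :=
  calc
    _ ≃ {m : (i : ι) → κ i →₀ ℕ // ∀ i, ((m i).sum fun _ => id) = d i} :=
      Finsupp.sigmaFinsuppEquivPiFinsupp.subtypeEquiv fun m => by
        simp only [Set.mem_ofPred_eq, _root_.funext_iff, weight_single_fst_apply]
        rfl
    _ ≃ ((i : ι) → {m : κ i →₀ ℕ // (m.sum fun _ => id) = d i}) :=
      Equiv.subtypePiEquivPi (p := fun i (m : κ i →₀ ℕ) => (m.sum fun _ => id) = d i)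
    _ ≃ ((i : ι) → Sym (κ i) (d i)) :=
      Equiv.piCongrRight fun i => (Sym.equivNatSum (κ i) (d i)).symm

variable {k : ℕ} (n d : Fin k → ℕ)

/-- The basis of the forms of multidegree `d` consisting of monomials. -/
def multiHomogBasis :
    Module.Basis ((i : Fin k) → Sym (Fin (n i + 1)) (d i)) ℂ (multiHomog n d) :=
  ((basisRestrictSupport ℂ _).map (LinearEquiv.ofEq _ _
    (weightedHomogeneousSubmodule_eq_finsupp_supported ℂ _ d).symm)).reindex
    (multidegreeExponentsEquiv d)

instance finite_multiHomog : Module.Finite ℂ (multiHomog n d) :=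
  .of_basis (multiHomogBasis n d)

theorem finrank_multiHomog :
    Module.finrank ℂ (multiHomog n d) = ∏ i, (n i + 1).multichoose (d i) := by
  simp [Module.finrank_eq_card_basis (multiHomogBasis n d), Sym.card_sym_eq_multichoose]

end Dimension

theorem inf_iInf_ker_ne_bot_of_card_lt_finrank {K V ι : Type*} [Field K] [AddCommGroup V]
    [Module K V] [Fintype ι] (W : Submodule K V) (φ : ι → Module.Dual K V)
    (h : Fintype.card ι < Module.finrank K W) : W ⊓ ⨅ j, LinearMap.ker (φ j) ≠ ⊥ := by
  have : FiniteDimensional K W := FiniteDimensional.of_finrank_pos (Nat.zero_lt_of_lt h)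
  have hker : LinearMap.ker (LinearMap.pi φ ∘ₗ W.subtype) ≠ ⊥ :=
    LinearMap.ker_ne_bot_of_finrank_lt (by simpa using h)
  rwa [LinearMap.ker_comp, LinearMap.ker_pi, Ne, ← Submodule.disjoint_iff_comap_eq_bot,
    disjoint_iff] at hker

section DoubleVanishing

variable {k : ℕ} {n d : Fin k → ℕ}

theorem sq_mem_multiHomog {f : MvPolynomial ((i : Fin k) × Fin (n i + 1)) ℂ}
    (hf : f ∈ multiHomog n d) : f ^ 2 ∈ multiHomog n (2 • d) :=
  IsWeightedHomogeneous.pow hf 2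

theorem sq_mem_doubleVanishingAt {p : (i : Fin k) → Fin (n i + 1) → ℂ}
    {f : MvPolynomial ((i : Fin k) × Fin (n i + 1)) ℂ} (hf : f ∈ vanishingAt n p) :
    f ^ 2 ∈ doubleVanishingAt n p := by
  have hp : eval (fun v => p v.1 v.2) f = 0 := by simpa [vanishingAt, aeval_eq_eval] using hf
  refine ⟨?_, (Submodule.mem_iInf _).mpr fun v => ?_⟩
  · simp [vanishingAt, hp]
  · simp [vanishingAt, Derivation.leibniz_pow, hp]

theorem doubleVanishingSpace_two_nsmul_ne_bot {z : ℕ} (p : Fin z → (i : Fin k) → Fin (n i + 1) → ℂ)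
    (h : z < Module.finrank ℂ (multiHomog n d)) : doubleVanishingSpace n (2 • d) p ≠ ⊥ := by
  obtain ⟨T, ⟨hT, hTp⟩, hT0⟩ : ∃ T ∈ multiHomog n d ⊓ ⨅ j, vanishingAt n (p j), T ≠ 0 :=
    Submodule.exists_mem_ne_zero_of_ne_bot
      (inf_iInf_ker_ne_bot_of_card_lt_finrank _ _ (by simpa using h))
  refine (Submodule.ne_bot_iff _).mpr ⟨T ^ 2, ⟨sq_mem_multiHomog hT, ?_⟩, pow_ne_zero 2 hT0⟩
  exact (Submodule.mem_iInf _).mpr fun j =>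
    sq_mem_doubleVanishingAt ((Submodule.mem_iInf _).mp hTp j)

instance finite_doubleVanishingSpace {z : ℕ} (p : Fin z → (i : Fin k) → Fin (n i + 1) → ℂ) :
    Module.Finite ℂ (doubleVanishingSpace n d p) :=
  Submodule.finiteDimensional_of_le inf_le_left

end DoubleVanishing

/-- Example ex1 (defectivity part): for every `a ≥ 1` and **all** points
`a₁, …, a_{2a+1} ∈ (ℂ²∖{0}) × (ℂ²∖{0})` there is a nonzero bihomogeneous polynomial of
bidegree `(2a, 2)` vanishing to order `≥ 2` at each point; in particular the space of
such polynomials has dimension strictly greater than the expected value `0`, so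
`(ℙ¹ × ℙ¹, O(2a,2))` is secant defective in its `(2a+1)`-secant variety. -/
theorem P1xP1_bidegree_2a_2_defective (a : ℕ) (ha : 1 ≤ a)
    (p : Fin (2 * a + 1) → (i : Fin 2) → Fin (biDims i + 1) → ℂ)
    (hp : ∀ j i, p j i ≠ 0) :
    (∃ f, f ≠ 0 ∧ f ∈ doubleVanishingSpace biDims ![2 * a, 2] p) ∧
      0 < Module.finrank ℂ (doubleVanishingSpace biDims ![2 * a, 2] p) := by
  have hdim : Module.finrank ℂ (multiHomog biDims ![a, 1]) = 2 * (a + 1) := by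
    rw [finrank_multiHomog, Fin.prod_univ_two]
    simp [biDims, Nat.multichoose_two, mul_comm]
  have hne : doubleVanishingSpace biDims ![2 * a, 2] p ≠ ⊥ := by
    have hlt : 2 * a + 1 < Module.finrank ℂ (multiHomog biDims ![a, 1]) := by omega
    simpa using doubleVanishingSpace_two_nsmul_ne_bot p hlt
  obtain ⟨f, hf, hf0⟩ := Submodule.exists_mem_ne_zero_of_ne_bot hne
  exact ⟨⟨f, hf0, hf⟩, Submodule.one_le_finrank_iff.mpr hne⟩
end
end

section
/- For every integer a ≥ 1 there exist points a₁, …, a_{2a+1} ∈ (ℂ²∖{0}) × (ℂ²∖{0}) such that the ℂ-vector space of bihomogeneous polynomials of bidegree (2a, 2) vanishing to order ≥ 2 at each a_j has dimension exactly 1; the unique (up to scalar) such polynomial is T², where T is the unique (up to scalar) bidegree-(a,1) form vanishing at all the points. -/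
open MvPolynomial

noncomputable section

/-!
The points are taken on the rational curve cut out by `T = y₁ x₀ ^ a - y₀ x₁ ^ a`, the graph
`y = x ^ a` in the chart `x₀ = y₀ = 1`. A form `F` of bidegree `(2a, 2)` restricts to the curve as a
polynomial of degree at most `4a`; double zeros at `2a + 1` points force this restriction to vanish,
so `F = T * G` with `G` of bidegree `(a, 1)`. Differentiating in `y` shows that `G` vanishes at the
same points, and since its restriction has degree at most `2a`, it vanishes on the curve as well.
Hence `G` is a constant multiple of `T`.
-/

open scoped Polynomial
open Polynomial.Bivariate

section ChainRule

variable {σ R A M : Type*} [Fintype σ] [CommSemiring R] [CommSemiring A] [Algebra R A]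
  [AddCommMonoid M] [Module R M] [Module A M]

lemma derivation_aeval (D : Derivation R A M) (f : σ → A) (p : MvPolynomial σ R) :
    D (aeval f p) = ∑ i, aeval f (pderiv i p) • D (f i) := by
  classical
  induction p using MvPolynomial.induction_on with
  | C c => simp
  | add p q hp hq => simp only [map_add, hp, hq, add_smul, Finset.sum_add_distrib]
  | mul_X p j hp =>
    simp only [map_mul, Derivation.leibniz, map_add, smul_eq_mul, add_smul, mul_smul, aeval_X, hp,
      Finset.sum_add_distrib, Finset.smul_sum]
    congr 1
    simp [pderiv_X, Pi.single_apply]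

end ChainRule

section Univariate

lemma X_sub_C_sq_dvd_of_eval_derivative_eq_zero {R : Type*} [CommRing R] {q : R[X]} {t : R}
    (h : q.eval t = 0) (h' : q.derivative.eval t = 0) :
    (Polynomial.X - Polynomial.C t) ^ 2 ∣ q := by
  rcases eq_or_ne q 0 with rfl | hq
  · exact dvd_zero _
  · rw [← Polynomial.le_rootMultiplicity_iff hq]
    exact (Polynomial.one_lt_rootMultiplicity_iff_isRoot hq).2 ⟨h, h'⟩

lemma eq_zero_of_forall_X_sub_C_pow_dvd {K ι : Type*} [Field K] [Fintype ι] {t : ι → K}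
    (ht : Function.Injective t) {q : K[X]} {n : ℕ} (hdeg : q.natDegree < n * Fintype.card ι)
    (hdvd : ∀ i, (Polynomial.X - Polynomial.C (t i)) ^ n ∣ q) : q = 0 := by
  have hprod : ∏ i, (Polynomial.X - Polynomial.C (t i)) ^ n ∣ q :=
    Finset.prod_dvd_of_coprime
      (fun i _ j _ hij => (Polynomial.pairwise_coprime_X_sub_C ht hij).pow) fun i _ => hdvd i
  refine Polynomial.eq_zero_of_dvd_of_natDegree_lt hprod ?_
  rwa [Polynomial.natDegree_prod_of_monic _ _
      fun i _ => (Polynomial.monic_X_sub_C (t i)).pow n,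
    Finset.sum_congr rfl fun i _ => by rw [Polynomial.natDegree_pow, Polynomial.natDegree_X_sub_C],
    Finset.sum_const, Finset.card_univ, smul_eq_mul, mul_one, mul_comm]

end Univariate

section Bivariate

section CommSemiring

variable {R : Type*} [CommSemiring R]

lemma coeff_coeff_swap (P : R[X][Y]) (i j : ℕ) :
    ((swap P).coeff i).coeff j = (P.coeff j).coeff i := by
  induction P using Polynomial.induction_on' with
  | add P Q hP hQ => simp only [map_add, Polynomial.coeff_add, hP, hQ]
  | monomial n f =>
    induction f using Polynomial.induction_on' with
    | add f g hf hg => simp only [map_add, Polynomial.coeff_add, hf, hg]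
    | monomial m r =>
      rw [swap_monomial_monomial]
      simp only [Polynomial.coeff_monomial]
      split_ifs <;> simp_all [Polynomial.coeff_monomial]

/-- `P : R[X][Y]` has degree at most `m` in `X` and at most `n` in `Y`. The degree in `X` is
expressed through the swap of the variables, which makes it multiplicative over a domain. -/
structure BidegreeLE (P : R[X][Y]) (m n : ℕ) : Prop where
  natDegree_swap_le : (swap P).natDegree ≤ m
  natDegree_le : P.natDegree ≤ n

namespace BidegreeLE

variable {P : R[X][Y]} {m n : ℕ}

lemma natDegree_coeff_le (hP : BidegreeLE P m n) (j : ℕ) : (P.coeff j).natDegree ≤ m := by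
  refine Polynomial.natDegree_le_iff_coeff_eq_zero.2 fun i hi => ?_
  rw [← coeff_coeff_swap, Polynomial.coeff_eq_zero_of_natDegree_lt
    (hP.natDegree_swap_le.trans_lt hi), Polynomial.coeff_zero]

lemma exists_eq_C_C (hP : BidegreeLE P 0 0) : ∃ c : R, P = Polynomial.C (Polynomial.C c) := by
  refine ⟨(P.coeff 0).coeff 0, ?_⟩
  rw [← Polynomial.eq_C_of_natDegree_le_zero (hP.natDegree_coeff_le 0),
    ← Polynomial.eq_C_of_natDegree_le_zero hP.natDegree_le]

lemma monomial_monomial {i j : ℕ} (hi : i ≤ m) (hj : j ≤ n) (r : R) :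
    BidegreeLE (Polynomial.monomial j (Polynomial.monomial i r)) m n where
  natDegree_swap_le := by
    rw [swap_monomial_monomial]
    exact (Polynomial.natDegree_monomial_le _).trans hi
  natDegree_le := (Polynomial.natDegree_monomial_le _).trans hj

lemma sum {ι : Type*} {s : Finset ι} {f : ι → R[X][Y]} (h : ∀ i ∈ s, BidegreeLE (f i) m n) :
    BidegreeLE (∑ i ∈ s, f i) m n where
  natDegree_swap_le := by
    rw [map_sum]
    exact Polynomial.natDegree_sum_le_of_forall_le _ _ fun i hi => (h i hi).natDegree_swap_le
  natDegree_le := Polynomial.natDegree_sum_le_of_forall_le _ _ fun i hi => (h i hi).natDegree_le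

lemma natDegree_eval_le (hP : BidegreeLE P m n) (h : R[X]) :
    (P.eval h).natDegree ≤ m + n * h.natDegree := by
  rw [Polynomial.eval_eq_sum_range' (Nat.lt_succ_of_le hP.natDegree_le)]
  refine Polynomial.natDegree_sum_le_of_forall_le _ _ fun j hj => ?_
  exact Polynomial.natDegree_mul_le_of_le (hP.natDegree_coeff_le j)
    (Polynomial.natDegree_pow_le.trans (Nat.mul_le_mul_right _ (Finset.mem_range_succ_iff.1 hj)))

end BidegreeLE

end CommSemiring

section Graph

lemma natDegree_swap_Y_sub_C {R : Type*} [CommRing R] (h : R[X]) :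
    (swap (Y - Polynomial.C h)).natDegree = h.natDegree := by
  rw [map_sub, swap_Y, swap_C, ← neg_sub, Polynomial.natDegree_neg, Polynomial.natDegree_sub_C,
    Polynomial.natDegree_map_eq_of_injective Polynomial.C_injective]

lemma BidegreeLE.exists_eq_Y_sub_C_mul {R : Type*} [CommRing R] [IsDomain R] {P : R[X][Y]}
    {h : R[X]} {m n : ℕ} (hP : BidegreeLE P (m + h.natDegree) (n + 1)) (hroot : P.eval h = 0) :
    ∃ Q, P = (Y - Polynomial.C h) * Q ∧ BidegreeLE Q m n := by
  obtain ⟨Q, rfl⟩ := Polynomial.dvd_iff_isRoot.2 hroot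
  refine ⟨Q, rfl, ?_⟩
  rcases eq_or_ne Q 0 with rfl | hQ
  · constructor <;> simp
  have hY : Y - Polynomial.C h ≠ 0 := Polynomial.X_sub_C_ne_zero h
  have hswap {P : R[X][Y]} (hP : P ≠ 0) : swap P ≠ 0 := by simpa using hP
  have hdegX := hP.natDegree_swap_le
  have hdegY := hP.natDegree_le
  rw [map_mul, Polynomial.natDegree_mul (hswap hY) (hswap hQ), natDegree_swap_Y_sub_C] at hdegX
  rw [Polynomial.natDegree_mul hY hQ, Polynomial.natDegree_X_sub_C] at hdegY
  constructor <;> omega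

variable {K ι : Type*} [Field K] [Fintype ι] {P : K[X][Y]} {h : K[X]} {t : ι → K}

theorem BidegreeLE.exists_eq_smul_Y_sub_C (hP : BidegreeLE P h.natDegree 1)
    (ht : Function.Injective t) (hcard : 2 * h.natDegree < Fintype.card ι)
    (hzero : ∀ i, (P.eval h).eval (t i) = 0) : ∃ c : K, P = c • (Y - Polynomial.C h) := by
  have hrestr : P.eval h = 0 :=
    Polynomial.eq_zero_of_natDegree_lt_card_of_eval_eq_zero _ ht hzero
      ((hP.natDegree_eval_le h).trans_lt (by omega))
  obtain ⟨Q, rfl, hQ⟩ := BidegreeLE.exists_eq_Y_sub_C_mul (m := 0) (n := 0) (by simpa) hrestr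
  obtain ⟨c, rfl⟩ := hQ.exists_eq_C_C
  exact ⟨c, by rw [Algebra.smul_def, mul_comm]; rfl⟩

theorem BidegreeLE.exists_eq_smul_Y_sub_C_sq (hP : BidegreeLE P (2 * h.natDegree) 2)
    (ht : Function.Injective t) (hcard : 2 * h.natDegree < Fintype.card ι)
    (hzero : ∀ i, (P.eval h).eval (t i) = 0)
    (htangent : ∀ i, (P.eval h).derivative.eval (t i) = 0)
    (hvertical : ∀ i, (P.derivative.eval h).eval (t i) = 0) :
    ∃ c : K, P = c • (Y - Polynomial.C h) ^ 2 := by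
  have hrestr : P.eval h = 0 :=
    eq_zero_of_forall_X_sub_C_pow_dvd ht ((hP.natDegree_eval_le h).trans_lt (by omega))
      fun i => X_sub_C_sq_dvd_of_eval_derivative_eq_zero (hzero i) (htangent i)
  obtain ⟨Q, rfl, hQ⟩ := BidegreeLE.exists_eq_Y_sub_C_mul (n := 1) (by rwa [← two_mul]) hrestr
  have hQzero (i : ι) : (Q.eval h).eval (t i) = 0 := by
    simpa [Polynomial.derivative_mul] using hvertical i
  obtain ⟨c, rfl⟩ := hQ.exists_eq_smul_Y_sub_C ht hcard hQzero
  exact ⟨c, by rw [mul_smul_comm, sq]⟩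

end Graph

end Bivariate

section MultiHomog

variable {k : ℕ} {n d e : Fin k → ℕ}

lemma X_mem_multiHomog (v : (i : Fin k) × Fin (n i + 1)) :
    X v ∈ multiHomog n (Pi.single v.1 1) :=
  isWeightedHomogeneous_X ℂ _ v

lemma mul_mem_multiHomog {F G : MvPolynomial ((i : Fin k) × Fin (n i + 1)) ℂ}
    (hF : F ∈ multiHomog n d) (hG : G ∈ multiHomog n e) : F * G ∈ multiHomog n (d + e) :=
  IsWeightedHomogeneous.mul hF hG

lemma pow_mem_multiHomog {F : MvPolynomial ((i : Fin k) × Fin (n i + 1)) ℂ}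
    (hF : F ∈ multiHomog n d) (m : ℕ) : F ^ m ∈ multiHomog n (m • d) :=
  IsWeightedHomogeneous.pow hF m

end MultiHomog

section Vanishing

variable {k : ℕ} {n : Fin k → ℕ} {p : (i : Fin k) → Fin (n i + 1) → ℂ}
  {F : MvPolynomial ((i : Fin k) × Fin (n i + 1)) ℂ}

lemma mem_vanishingAt_iff :
    F ∈ vanishingAt n p ↔ aeval (fun v : (i : Fin k) × Fin (n i + 1) => p v.1 v.2) F = 0 :=
  Iff.rfl

lemma mem_doubleVanishingAt_iff :
    F ∈ doubleVanishingAt n p ↔ F ∈ vanishingAt n p ∧ ∀ v, pderiv v F ∈ vanishingAt n p := by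
  simp only [doubleVanishingAt, Submodule.mem_inf, Submodule.mem_iInf, Submodule.mem_comap,
    Derivation.coeFn_coe]

lemma sq_mem_doubleVanishingAt_s3 (hF : F ∈ vanishingAt n p) : F ^ 2 ∈ doubleVanishingAt n p := by
  rw [mem_vanishingAt_iff] at hF
  refine mem_doubleVanishingAt_iff.2 ⟨?_, fun v => ?_⟩
  · rw [mem_vanishingAt_iff, map_pow, hF, zero_pow two_ne_zero]
  · rw [mem_vanishingAt_iff, sq, Derivation.leibniz, smul_eq_mul, map_add, map_mul, hF, zero_mul,
      add_zero]

lemma mem_doubleVanishingSpace_iff {d : Fin k → ℕ} {z : ℕ}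
    {a : Fin z → (i : Fin k) → Fin (n i + 1) → ℂ} :
    F ∈ doubleVanishingSpace n d a ↔
      F ∈ multiHomog n d ∧ ∀ j, F ∈ doubleVanishingAt n (a j) := by
  simp only [doubleVanishingSpace, Submodule.mem_inf, Submodule.mem_iInf]

end Vanishing

/-- The type indexing the homogeneous coordinates of `ℙ¹ × ℙ¹`. -/
abbrev BiVar : Type := (i : Fin 2) × Fin (biDims i + 1)

namespace BiVar

/-- The coordinate `x₀` of the first factor `ℙ¹`. -/
abbrev x₀ : BiVar := ⟨0, (0 : Fin 2)⟩
/-- The coordinate `x₁` of the first factor `ℙ¹`. -/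
abbrev x₁ : BiVar := ⟨0, (1 : Fin 2)⟩
/-- The coordinate `y₀` of the second factor `ℙ¹`. -/
abbrev y₀ : BiVar := ⟨1, (0 : Fin 2)⟩
/-- The coordinate `y₁` of the second factor `ℙ¹`. -/
abbrev y₁ : BiVar := ⟨1, (1 : Fin 2)⟩

protected lemma forall_iff {p : BiVar → Prop} : (∀ v, p v) ↔ p x₀ ∧ p x₁ ∧ p y₀ ∧ p y₁ := by
  rw [Sigma.forall, Fin.forall_fin_two, ← and_assoc]
  exact and_congr Fin.forall_fin_two Fin.forall_fin_two

@[to_additive]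
protected lemma prod_eq {M : Type*} [CommMonoid M] (f : BiVar → M) :
    ∏ v, f v = f x₀ * f x₁ * (f y₀ * f y₁) := by
  rw [Fintype.prod_sigma, Fin.prod_univ_two]
  exact congrArg₂ (· * ·) (Fin.prod_univ_two (f := fun j => f ⟨0, j⟩))
    (Fin.prod_univ_two (f := fun j => f ⟨1, j⟩))

protected lemma weight_eq_iff {m : BiVar →₀ ℕ} {d : Fin 2 → ℕ} :
    Finsupp.weight (fun v : BiVar => (Pi.single v.1 1 : Fin 2 → ℕ)) m = d ↔
      m x₀ + m x₁ = d 0 ∧ m y₀ + m y₁ = d 1 := by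
  rw [Finsupp.weight_apply, Finsupp.sum_fintype _ _ (by simp), BiVar.sum_eq, funext_iff,
    Fin.forall_fin_two]
  simp

end BiVar

open BiVar

/-- The point `((1 : u), (1 : w))` of `ℙ¹ × ℙ¹`, with coordinates in any semiring: besides points
over `ℂ`, the generic point of a curve and of the affine chart itself are of this form. -/
def affinePoint {R : Type*} [CommSemiring R] (u w : R) (i : Fin 2) : Fin (biDims i + 1) → R :=
  (![![1, u], ![1, w]] i : Fin 2 → R)

lemma affinePoint_ne_zero {R : Type*} [CommSemiring R] [Nontrivial R] (u w : R) (i : Fin 2) :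
    affinePoint u w i ≠ 0 := by
  intro h
  have h₀ := congrFun h (0 : Fin 2)
  fin_cases i <;> exact one_ne_zero (α := R) h₀

lemma map_aeval_affinePoint {A B : Type*} [CommSemiring A] [Algebra ℂ A] [CommSemiring B]
    [Algebra ℂ B] (φ : A →ₐ[ℂ] B) (u w : A) (F : MvPolynomial BiVar ℂ) :
    φ (aeval (fun v => affinePoint u w v.1 v.2) F) =
      aeval (fun v => affinePoint (φ u) (φ w) v.1 v.2) F := by
  rw [comp_aeval_apply]
  congr 2
  exact funext (BiVar.forall_iff.2 (by simp [affinePoint]))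

/-- Dehomogenization `x₀ = y₀ = 1`, with `x₁` and `y₁` becoming the inner and the outer variable of
`ℂ[X][Y]`. -/
def dehomogenize : MvPolynomial BiVar ℂ →ₐ[ℂ] ℂ[X][Y] :=
  aeval fun v => affinePoint (Polynomial.C Polynomial.X) Y v.1 v.2

section Dehomogenization

lemma eval_dehomogenize (F : MvPolynomial BiVar ℂ) (h : ℂ[X]) :
    (dehomogenize F).eval h = aeval (fun v => affinePoint Polynomial.X h v.1 v.2) F := by
  have hmap := map_aeval_affinePoint ((Polynomial.aeval (R := ℂ[X]) h).restrictScalars ℂ)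
    (Polynomial.C Polynomial.X) Y F
  simpa [dehomogenize] using hmap

lemma eval_eval_dehomogenize (F : MvPolynomial BiVar ℂ) (h : ℂ[X]) (t : ℂ) :
    ((dehomogenize F).eval h).eval t = aeval (fun v => affinePoint t (h.eval t) v.1 v.2) F := by
  have hmap := map_aeval_affinePoint (Polynomial.aeval t) Polynomial.X h F
  simpa [eval_dehomogenize] using hmap

lemma derivative_dehomogenize (F : MvPolynomial BiVar ℂ) :
    (dehomogenize F).derivative = dehomogenize (pderiv y₁ F) := by
  have hchain := derivation_aeval ((Polynomial.derivative' (R := ℂ[X])).restrictScalars ℂ)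
    (fun v : BiVar => affinePoint (Polynomial.C Polynomial.X) Y v.1 v.2) F
  simpa [BiVar.sum_eq, affinePoint, dehomogenize] using hchain

lemma derivative_eval_dehomogenize (F : MvPolynomial BiVar ℂ) (h : ℂ[X]) :
    ((dehomogenize F).eval h).derivative = (dehomogenize (pderiv x₁ F)).eval h +
      (dehomogenize (pderiv y₁ F)).eval h * h.derivative := by
  simp only [eval_dehomogenize]
  have hchain := derivation_aeval (Polynomial.derivative' (R := ℂ))
    (fun v : BiVar => affinePoint Polynomial.X h v.1 v.2) F
  simpa [BiVar.sum_eq, affinePoint] using hchain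

lemma dehomogenize_monomial (m : BiVar →₀ ℕ) (c : ℂ) :
    dehomogenize (monomial m c) = Polynomial.monomial (m y₁) (Polynomial.monomial (m x₁) c) := by
  rw [dehomogenize, aeval_monomial, Finsupp.prod_fintype _ _ (by simp), BiVar.prod_eq,
    ← Polynomial.C_mul_X_pow_eq_monomial, ← Polynomial.C_mul_X_pow_eq_monomial]
  simp [affinePoint, Polynomial.algebraMap_apply, mul_assoc]

variable {d : Fin 2 → ℕ} {F : MvPolynomial BiVar ℂ}

lemma bidegreeLE_dehomogenize (hF : F ∈ multiHomog biDims d) :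
    BidegreeLE (dehomogenize F) (d 0) (d 1) := by
  rw [F.as_sum, map_sum]
  refine BidegreeLE.sum fun m hm => ?_
  obtain ⟨hx, hy⟩ := BiVar.weight_eq_iff.1 (hF (mem_support_iff.1 hm))
  rw [dehomogenize_monomial]
  exact BidegreeLE.monomial_monomial (by omega) (by omega) _

lemma coeff_coeff_dehomogenize (hF : F ∈ multiHomog biDims d) {m : BiVar →₀ ℕ}
    (hm : Finsupp.weight (fun v : BiVar => (Pi.single v.1 1 : Fin 2 → ℕ)) m = d) :
    ((dehomogenize F).coeff (m y₁)).coeff (m x₁) = F.coeff m := by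
  conv_lhs => rw [F.as_sum]
  simp only [map_sum, dehomogenize_monomial, Polynomial.finsetSum_coeff]
  rw [Finset.sum_eq_single m]
  · simp
  · intro m' hm' hne
    obtain ⟨hx, hy⟩ := BiVar.weight_eq_iff.1 hm
    obtain ⟨hx', hy'⟩ := BiVar.weight_eq_iff.1 (hF (mem_support_iff.1 hm'))
    by_cases hy₁ : m' y₁ = m y₁
    · have hx₁ : m' x₁ ≠ m x₁ := fun hx₁ => hne <| Finsupp.ext <|
        BiVar.forall_iff.2 ⟨by omega, hx₁, by omega, hy₁⟩
      simp [hy₁, Polynomial.coeff_monomial, hx₁]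
    · simp [Polynomial.coeff_monomial, hy₁]
  · simp

lemma injOn_dehomogenize (d : Fin 2 → ℕ) : Set.InjOn dehomogenize (multiHomog biDims d) := by
  intro F hF G hG hFG
  ext m
  by_cases hm : Finsupp.weight (fun v : BiVar => (Pi.single v.1 1 : Fin 2 → ℕ)) m = d
  · rw [← coeff_coeff_dehomogenize hF hm, hFG, coeff_coeff_dehomogenize hG hm]
  · rw [IsWeightedHomogeneous.coeff_eq_zero hF m hm, IsWeightedHomogeneous.coeff_eq_zero hG m hm]

lemma mem_vanishingAt_affinePoint {h : ℂ[X]} {t : ℂ} :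
    F ∈ vanishingAt biDims (affinePoint t (h.eval t)) ↔ ((dehomogenize F).eval h).eval t = 0 := by
  rw [eval_eval_dehomogenize, mem_vanishingAt_iff]

end Dehomogenization

/-- The form `T = y₁ x₀ ^ a - y₀ x₁ ^ a` of bidegree `(a, 1)`, which cuts out the closure of the
graph `y = x ^ a` of the affine chart. -/
def powerGraphForm (a : ℕ) : MvPolynomial BiVar ℂ := X y₁ * X x₀ ^ a - X y₀ * X x₁ ^ a

section PowerGraph

lemma dehomogenize_powerGraphForm (a : ℕ) :
    dehomogenize (powerGraphForm a) = Y - Polynomial.C (Polynomial.X ^ a) := by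
  simp [dehomogenize, powerGraphForm, affinePoint]

lemma powerGraphForm_ne_zero (a : ℕ) : powerGraphForm a ≠ 0 := by
  intro h
  have hY := dehomogenize_powerGraphForm a
  rw [h, map_zero] at hY
  exact Polynomial.X_sub_C_ne_zero _ hY.symm

lemma powerGraphForm_mem_multiHomog (a : ℕ) : powerGraphForm a ∈ multiHomog biDims ![a, 1] := by
  have hdeg : Pi.single 1 1 + a • Pi.single 0 1 = (![a, 1] : Fin 2 → ℕ) := by
    ext i
    fin_cases i <;> simp
  rw [← hdeg]
  exact Submodule.sub_mem _
    (mul_mem_multiHomog (X_mem_multiHomog y₁) (pow_mem_multiHomog (X_mem_multiHomog x₀) a))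
    (mul_mem_multiHomog (X_mem_multiHomog y₀) (pow_mem_multiHomog (X_mem_multiHomog x₁) a))

lemma powerGraphForm_sq_mem_multiHomog (a : ℕ) :
    powerGraphForm a ^ 2 ∈ multiHomog biDims ![2 * a, 2] := by
  simpa using pow_mem_multiHomog (powerGraphForm_mem_multiHomog a) 2

lemma powerGraphForm_mem_vanishingAt (a : ℕ) (t : ℂ) :
    powerGraphForm a ∈ vanishingAt biDims (affinePoint t (t ^ a)) := by
  simp [mem_vanishingAt_iff, powerGraphForm, affinePoint]

variable {a z : ℕ} {t : Fin z → ℂ} {F : MvPolynomial BiVar ℂ}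

theorem exists_eq_smul_powerGraphForm (hz : 2 * a < z) (ht : Function.Injective t)
    (hF : F ∈ multiHomog biDims ![a, 1])
    (hzero : ∀ j, F ∈ vanishingAt biDims (affinePoint (t j) (t j ^ a))) :
    ∃ c : ℂ, F = c • powerGraphForm a := by
  have hdeg : (Polynomial.X ^ a : ℂ[X]).natDegree = a := Polynomial.natDegree_X_pow a
  obtain ⟨c, hc⟩ := BidegreeLE.exists_eq_smul_Y_sub_C (h := Polynomial.X ^ a)
    (by simpa [hdeg] using bidegreeLE_dehomogenize hF) ht (by simpa [hdeg] using hz)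
    fun j => mem_vanishingAt_affinePoint.1 (by simpa using hzero j)
  refine ⟨c, injOn_dehomogenize _ hF (Submodule.smul_mem _ c (powerGraphForm_mem_multiHomog a)) ?_⟩
  rw [hc, map_smul, dehomogenize_powerGraphForm]

theorem exists_eq_smul_powerGraphForm_sq (hz : 2 * a < z) (ht : Function.Injective t)
    (hF : F ∈ doubleVanishingSpace biDims ![2 * a, 2] fun j => affinePoint (t j) (t j ^ a)) :
    ∃ c : ℂ, F = c • powerGraphForm a ^ 2 := by
  obtain ⟨hhom, hdouble⟩ := mem_doubleVanishingSpace_iff.1 hF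
  have heval {G : MvPolynomial BiVar ℂ} {j : Fin z}
      (hG : G ∈ vanishingAt biDims (affinePoint (t j) (t j ^ a))) :
      ((dehomogenize G).eval (Polynomial.X ^ a)).eval (t j) = 0 :=
    mem_vanishingAt_affinePoint.1 (by simpa using hG)
  have hzero j := heval (mem_doubleVanishingAt_iff.1 (hdouble j)).1
  have hpderiv j v := heval ((mem_doubleVanishingAt_iff.1 (hdouble j)).2 v)
  have hdeg : (Polynomial.X ^ a : ℂ[X]).natDegree = a := Polynomial.natDegree_X_pow a
  obtain ⟨c, hc⟩ := BidegreeLE.exists_eq_smul_Y_sub_C_sq (h := Polynomial.X ^ a)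
    (by simpa [hdeg] using bidegreeLE_dehomogenize hhom) ht (by simpa [hdeg] using hz) hzero
    (fun j => by
      rw [derivative_eval_dehomogenize, Polynomial.eval_add, Polynomial.eval_mul, hpderiv, hpderiv,
        zero_mul, add_zero])
    fun j => by rw [derivative_dehomogenize, hpderiv]
  refine ⟨c, injOn_dehomogenize _ hhom
    (Submodule.smul_mem _ c (powerGraphForm_sq_mem_multiHomog a)) ?_⟩
  rw [hc, map_smul, map_pow dehomogenize, dehomogenize_powerGraphForm]

theorem doubleVanishingSpace_powerGraph_eq_span (hz : 2 * a < z) (ht : Function.Injective t) :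
    doubleVanishingSpace biDims ![2 * a, 2] (fun j => affinePoint (t j) (t j ^ a)) =
      Submodule.span ℂ {powerGraphForm a ^ 2} := by
  refine le_antisymm (fun F hF => ?_) ?_
  · obtain ⟨c, rfl⟩ := exists_eq_smul_powerGraphForm_sq hz ht hF
    exact Submodule.smul_mem _ c (Submodule.mem_span_singleton_self _)
  · rw [Submodule.span_singleton_le_iff_mem, mem_doubleVanishingSpace_iff]
    exact ⟨powerGraphForm_sq_mem_multiHomog a,
      fun j => sq_mem_doubleVanishingAt_s3 (powerGraphForm_mem_vanishingAt a (t j))⟩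

end PowerGraph

/-- Example ex1 (precise form): for every `a ≥ 1` there exist points
`a₁, …, a_{2a+1} ∈ (ℂ²∖{0}) × (ℂ²∖{0})` such that the space of bihomogeneous polynomials of
bidegree `(2a, 2)` vanishing to order `≥ 2` at every point has dimension exactly `1`;
the unique (up to scalar) such polynomial is `T ^ 2`, where `T` is the unique (up to scalar)
bidegree-`(a, 1)` form vanishing at all the points. -/
theorem P1xP1_bidegree_2a_2_defect_is_one (a : ℕ) (ha : 1 ≤ a) :
    ∃ p : Fin (2 * a + 1) → (i : Fin 2) → Fin (biDims i + 1) → ℂ,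
      (∀ j i, p j i ≠ 0) ∧
      Module.finrank ℂ (doubleVanishingSpace biDims ![2 * a, 2] p) = 1 ∧
      ∃ T, T ≠ 0 ∧ T ∈ multiHomog biDims ![a, 1] ∧
        (∀ j, T ∈ vanishingAt biDims (p j)) ∧
        (∀ T', T' ∈ multiHomog biDims ![a, 1] → (∀ j, T' ∈ vanishingAt biDims (p j)) →
          ∃ c : ℂ, T' = c • T) ∧
        doubleVanishingSpace biDims ![2 * a, 2] p = Submodule.span ℂ {T ^ 2} := by
  have ht : Function.Injective fun j : Fin (2 * a + 1) => ((j : ℕ) : ℂ) :=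
    Nat.cast_injective.comp Fin.val_injective
  have hspan := doubleVanishingSpace_powerGraph_eq_span (Nat.lt_succ_self (2 * a)) ht
  refine ⟨fun j => affinePoint (j : ℕ) ((j : ℕ) ^ a), fun j => affinePoint_ne_zero _ _, ?_,
    powerGraphForm a, powerGraphForm_ne_zero a, powerGraphForm_mem_multiHomog a,
    fun j => powerGraphForm_mem_vanishingAt a j,
    fun T' hT' hzero => exists_eq_smul_powerGraphForm (Nat.lt_succ_self _) ht hT' hzero, hspan⟩
  rw [hspan]
  exact finrank_span_singleton (pow_ne_zero 2 (powerGraphForm_ne_zero a))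
end
end

section
/- Let n, t, α, z be integers with n ≥ 3, t ≥ 2, α ≥ 2n² and z ≥ 1. Set e₁ = ⌊α/n⌋, f₁ = α − n·e₁ and Δ = (t+1)α + n − (n+1)z. If Δ ≥ 0 (i.e., (n+1)z ≤ (t+1)α + n), then Δ + z ≥ t·f₁ + e₁ + n. -/
/-!
Multiplying the defect `Δ + z - (t f₁ + e₁ + n)` by `n + 1` eliminates `z` and leaves
`n Δ + (t n - 1) (e₁ - f₁) - n²`. The size of `α` forces `e₁ ≥ 2n - 1`, while `f₁ ≤ n - 1`, so
`e₁ - f₁ ≥ n` and this is at least `(n - 1) n - n² = -n`, which exceeds `-(n + 1)`. Hence the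
defect is larger than `-1`, and being an integer it is nonnegative.
-/

theorem add_one_mul_defect_eq {R : Type*} [CommRing R] {n t α z e f Δ : R}
    (hdiv : α = n * e + f) (hΔ : Δ = (t + 1) * α + n - (n + 1) * z) :
    (n + 1) * (Δ + z - (t * f + e + n)) = n * Δ + (t * n - 1) * (e - f) - n ^ 2 := by
  subst hdiv hΔ
  ring

theorem neg_one_lt_defect {R : Type*} [CommRing R] [LinearOrder R] [IsStrictOrderedRing R]
    {n t α z e f Δ : R} (hn : 1 ≤ n) (ht : 1 ≤ t) (hef : n ≤ e - f)
    (hdiv : α = n * e + f) (hΔ : Δ = (t + 1) * α + n - (n + 1) * z) (hΔ0 : 0 ≤ Δ) :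
    -1 < Δ + z - (t * f + e + n) := by
  have hn0 : 0 ≤ n := zero_le_one.trans hn
  have htn : n - 1 ≤ t * n - 1 := sub_le_sub_right (le_mul_of_one_le_left hn0 ht) 1
  have hprod : (n - 1) * n ≤ (t * n - 1) * (e - f) :=
    mul_le_mul htn hef hn0 ((sub_nonneg.2 hn).trans htn)
  have hscaled : (n + 1) * (-1) < (n + 1) * (Δ + z - (t * f + e + n)) :=
    calc (n + 1) * (-1) < 0 + (n - 1) * n - n ^ 2 := by linarith
      _ ≤ n * Δ + (t * n - 1) * (e - f) - n ^ 2 := by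
        gcongr
        exact mul_nonneg hn0 hΔ0
      _ = (n + 1) * (Δ + z - (t * f + e + n)) := (add_one_mul_defect_eq hdiv hΔ).symm
  exact lt_of_mul_lt_mul_left hscaled (by positivity)

theorem le_of_mul_le_mul_add_of_lt {n m e f : ℤ} (hn : 0 ≤ n) (h : n * m ≤ n * e + f)
    (hf : f < n) : m ≤ e := by
  have hlt : n * m < n * (e + 1) := by linarith
  exact Int.lt_add_one_iff.1 (lt_of_mul_lt_mul_left hlt hn)

theorem claim1_general {n t α z e₁ f₁ Δ : ℤ} (ht : 1 ≤ t) (hα : n * (2 * n - 1) ≤ α)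
    (hdiv : α = n * e₁ + f₁) (hf₁0 : 0 ≤ f₁) (hf₁ : f₁ < n)
    (hΔ : Δ = (t + 1) * α + n - (n + 1) * z) (hΔ0 : 0 ≤ Δ) :
    t * f₁ + e₁ + n ≤ Δ + z := by
  have hn : 1 ≤ n := hf₁0.trans_lt hf₁
  have he₁ : 2 * n - 1 ≤ e₁ := le_of_mul_le_mul_add_of_lt (by lia) (hdiv ▸ hα) hf₁
  have hdefect := neg_one_lt_defect hn ht (by lia) hdiv hΔ hΔ0
  lia

/-- Claim 1 in the proof of Theorem i1: with `n ≥ 3`, `t ≥ 2`, `α ≥ 2n²`, `z ≥ 1`,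
`e₁` and `f₁` the quotient and remainder of the division of `α` by `n`, and
`Δ = (t+1)α + n - (n+1)z ≥ 0`, one has `Δ + z ≥ t·f₁ + e₁ + n`. -/
theorem claim1 (n t α z e₁ f₁ Δ : ℤ) (hn : 3 ≤ n) (ht : 2 ≤ t)
    (hα : 2 * n ^ 2 ≤ α) (hz : 1 ≤ z)
    (hdiv : α = n * e₁ + f₁) (hf₁0 : 0 ≤ f₁) (hf₁ : f₁ < n)
    (hΔ : Δ = (t + 1) * α + n - (n + 1) * z) (hΔ0 : 0 ≤ Δ) :
    Δ + z ≥ t * f₁ + e₁ + n :=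
  claim1_general (by lia) (by linarith) hdiv hf₁0 hf₁ hΔ hΔ0
end
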